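/- arXiv:1009.0056 — 3 statements merged into one kernel-verified Lean document; each statement's English description precedes it below -/
import Mathlib

section
/- Suppose every transaction conflicts with at most Δ other transactions, and every transaction has duration at most τ_max. Then there exists a valid schedule whose makespan is at most (Δ + 1)·τ_max. -/
/-- Two distinct transactions conflict if one writes a resource the other accesses. -/
def Conflict {ι : Type*} {s : ℕ} (W Rd : ι → Finset (Fin s)) (i j : ι) : Prop :=
  i ≠ j ∧ (((W i) ∩ (W j ∪ Rd j)).Nonempty ∨ ((W j) ∩ (W i ∪ Rd i)).Nonempty)

/-- A schedule is valid if conflicting transactions execute in disjoint time intervals. -/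
def ValidSchedule {ι : Type*} {s : ℕ} (W Rd : ι → Finset (Fin s)) (τ : ι → ℕ)
    (σ : ι → ℕ) : Prop :=
  ∀ i j : ι, Conflict W Rd i j →
    Disjoint (Finset.Ico (σ i) (σ i + τ i)) (Finset.Ico (σ j) (σ j + τ j))

/-- The makespan of a schedule. -/
def makespan {ι : Type*} [Fintype ι] (τ : ι → ℕ) (σ : ι → ℕ) : ℕ :=
  Finset.univ.sup fun i => σ i + τ i

/-!
Fix a well-order of the transactions and give each the least colour missing from its earlier
neighbours in the conflict graph: at most `Δ` colours are forbidden, so one of `0, …, Δ` is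
chosen. Running the transactions of colour `c` from time `c * τmax` on, each colour class is done
before the next one starts, and the last class ends by `(Δ + 1) * τmax`.
-/

section GreedyColoring

lemma sInf_compl_le_of_encard_le {S : Set ℕ} {d : ℕ} (hS : S.encard ≤ d) : sInf Sᶜ ≤ d := by
  by_contra! hlt
  have hsub : Set.Iic d ⊆ S := fun k hk ↦
    Set.notMem_compl_iff.1 (Nat.notMem_of_lt_sInf (lt_of_le_of_lt hk hlt))
  have hcard : ((d + 1 : ℕ) : ℕ∞) ≤ d := by
    simpa [Set.encard_eq_coe_toFinset_card] using (Set.encard_le_encard hsub).trans hS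
  exact absurd (Nat.cast_le.1 hcard) (Nat.not_succ_le_self d)

lemma sInf_compl_notMem {S : Set ℕ} (hS : S.Finite) : sInf Sᶜ ∉ S :=
  Nat.sInf_mem hS.infinite_compl.nonempty

variable {V : Type*} {G : SimpleGraph V} {d : ℕ}

section WellFounded

variable [LT V]

/-- The neighbours of `v` that precede it in the order, i.e. those already coloured when the
greedy algorithm reaches `v`. -/
def earlierNeighbors (G : SimpleGraph V) (v : V) : Set V := {u | u < v ∧ G.Adj v u}

/-- The greedy colouring along a well-founded `<`: each vertex receives the least colour not used
on its earlier neighbours. If these use up every colour, the value is the junk `sInf ∅ = 0`. -/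
noncomputable def greedyColor [WellFoundedLT V] (G : SimpleGraph V) (v : V) : ℕ :=
  sInf {k | ∀ u < v, G.Adj v u → greedyColor G u ≠ k}
termination_by (wellFounded_lt (α := V)).wrap v

variable [WellFoundedLT V]

lemma greedyColor_eq_sInf_compl_image (G : SimpleGraph V) (v : V) :
    greedyColor G v = sInf (greedyColor G '' earlierNeighbors G v)ᶜ := by
  rw [greedyColor]
  congr 1
  ext k
  simp [earlierNeighbors]

lemma greedyColor_le {v : V} (hv : (earlierNeighbors G v).encard ≤ d) : greedyColor G v ≤ d := by
  rw [greedyColor_eq_sInf_compl_image]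
  exact sInf_compl_le_of_encard_le ((Set.encard_image_le _ _).trans hv)

lemma greedyColor_ne_of_mem_earlierNeighbors {u v : V} (hv : (earlierNeighbors G v).Finite)
    (hu : u ∈ earlierNeighbors G v) : greedyColor G u ≠ greedyColor G v := by
  intro heq
  apply sInf_compl_notMem (hv.image (greedyColor G))
  rw [← greedyColor_eq_sInf_compl_image, ← heq]
  exact Set.mem_image_of_mem _ hu

end WellFounded

lemma greedyColor_ne_of_adj [LinearOrder V] [WellFoundedLT V]
    (hG : ∀ v, (earlierNeighbors G v).Finite) {u v : V} (huv : G.Adj u v) :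
    greedyColor G u ≠ greedyColor G v := by
  rcases lt_or_gt_of_ne huv.ne with hlt | hgt
  · exact greedyColor_ne_of_mem_earlierNeighbors (hG v) ⟨hlt, huv.symm⟩
  · exact (greedyColor_ne_of_mem_earlierNeighbors (hG u) ⟨hgt, huv⟩).symm

theorem colorable_of_encard_earlierNeighbors_le [LinearOrder V] [WellFoundedLT V]
    (hG : ∀ v, (earlierNeighbors G v).encard ≤ d) : G.Colorable (d + 1) := by
  have hfin : ∀ v, (earlierNeighbors G v).Finite := fun v ↦ Set.finite_of_encard_le_coe (hG v)
  exact (SimpleGraph.colorable_iff_exists_bdd_nat_coloring _).2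
    ⟨.mk (greedyColor G) (greedyColor_ne_of_adj hfin),
      fun v ↦ Nat.lt_succ_of_le (greedyColor_le (hG v))⟩

theorem colorable_of_encard_neighborSet_le (hG : ∀ v, (G.neighborSet v).encard ≤ d) :
    G.Colorable (d + 1) := by
  obtain ⟨_, _⟩ := exists_wellFoundedLT V
  exact colorable_of_encard_earlierNeighbors_le fun v ↦
    (Set.encard_le_encard fun _ hu ↦ hu.2).trans (hG v)

end GreedyColoring

section BlockSchedule

lemma mul_add_le_mul_of_lt {a b t T : ℕ} (hab : a < b) (ht : t ≤ T) : a * T + t ≤ b * T :=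
  calc
    a * T + t ≤ a * T + T := by gcongr
    _ = (a + 1) * T := (Nat.succ_mul a T).symm
    _ ≤ b * T := Nat.mul_le_mul_right T hab

lemma disjoint_Ico_mul_of_ne {a b t u T : ℕ} (hab : a ≠ b) (ht : t ≤ T) (hu : u ≤ T) :
    Disjoint (Finset.Ico (a * T) (a * T + t)) (Finset.Ico (b * T) (b * T + u)) := by
  wlog hlt : a < b generalizing a b t u
  · exact (this hab.symm hu ht (by omega)).symm
  have hend : a * T + t ≤ b * T := mul_add_le_mul_of_lt hlt ht
  exact (Finset.Ico_disjoint_Ico_consecutive (a * T) (b * T) _).mono_left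
    (Finset.Ico_subset_Ico_right hend)

variable {ι : Type*} {s : ℕ} {W Rd : ι → Finset (Fin s)} {τ : ι → ℕ} {T : ℕ}

/-- The conflict graph: its vertices are the transactions, its edges the conflicting pairs. It
turns the colour classes of a proper colouring into sets of transactions that may run together. -/
def conflictGraph (W Rd : ι → Finset (Fin s)) : SimpleGraph ι where
  Adj := Conflict W Rd
  symm := ⟨fun _ _ h ↦ ⟨h.1.symm, h.2.symm⟩⟩
  loopless := ⟨fun _ h ↦ h.1 rfl⟩

/-- The schedule that runs the colour classes of `c` in consecutive blocks of length `T`, the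
class of colour `k` starting at time `k * T`. -/
def blockSchedule (c : ι → ℕ) (T : ℕ) (i : ι) : ℕ := c i * T

lemma validSchedule_blockSchedule (C : (conflictGraph W Rd).Coloring ℕ) (hτ : ∀ i, τ i ≤ T) :
    ValidSchedule W Rd τ (blockSchedule C T) :=
  fun i j hij ↦ disjoint_Ico_mul_of_ne (C.valid hij) (hτ i) (hτ j)

lemma makespan_blockSchedule_le [Fintype ι] {c : ι → ℕ} {n : ℕ} (hc : ∀ i, c i < n)
    (hτ : ∀ i, τ i ≤ T) : makespan τ (blockSchedule c T) ≤ n * T :=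
  Finset.sup_le fun i _ ↦ mul_add_le_mul_of_lt (hc i) (hτ i)

theorem exists_validSchedule_makespan_le_of_colorable [Fintype ι] {n : ℕ}
    (hn : (conflictGraph W Rd).Colorable n) (hτ : ∀ i, τ i ≤ T) :
    ∃ σ : ι → ℕ, ValidSchedule W Rd τ σ ∧ makespan τ σ ≤ n * T := by
  obtain ⟨C, hC⟩ := (SimpleGraph.colorable_iff_exists_bdd_nat_coloring n).1 hn
  exact ⟨blockSchedule C T, validSchedule_blockSchedule C hτ, makespan_blockSchedule_le hC hτ⟩

end BlockSchedule

/-- If every transaction conflicts with at most `Δ` others and all durations are at most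
`τmax`, there is a valid schedule with makespan at most `(Δ + 1)·τmax`. -/
theorem stmt3 {ι : Type*} [Fintype ι] {s Δ τmax : ℕ}
    (W Rd : ι → Finset (Fin s)) (τ : ι → ℕ) (hτ : ∀ i, 1 ≤ τ i)
    (hdeg : ∀ i : ι, {j : ι | Conflict W Rd i j}.ncard ≤ Δ)
    (hτmax : ∀ i, τ i ≤ τmax) :
    ∃ σ : ι → ℕ, ValidSchedule W Rd τ σ ∧ makespan τ σ ≤ (Δ + 1) * τmax := by
  have hdegree : ∀ i, ((conflictGraph W Rd).neighborSet i).encard ≤ Δ := fun i ↦ by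
    rw [← Set.Finite.cast_ncard_eq (Set.toFinite _)]
    exact Nat.cast_le.2 (hdeg i)
  exact exists_validSchedule_makespan_le_of_colorable
    (colorable_of_encard_neighborSet_le hdegree) hτmax
end

section
/- Suppose there are n transactions and s ≥ 1 resources, every transaction writes at least m ≥ 1 resources (|W i| ≥ m for all i), and every duration satisfies τ_min ≤ τ i ≤ 2·τ_min for some τ_min ≥ 1. Then there exists a valid schedule σ such that for every valid schedule σ′, the makespan of σ is at most (2·s/m) times the makespan of σ′. -/
/-!
Running the transactions one after another takes the total work `∑ i, τ i`. In any valid schedule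
the transactions writing a fixed resource conflict pairwise, so their durations add up to at most
the makespan. Summing this over all `s` resources counts the duration of each transaction at least
`m` times, whence `m * ∑ i, τ i ≤ s * makespan τ σ'`.
-/

section DoubleCounting

variable {ι α M : Type*} [Fintype ι] [Fintype α] [DecidableEq α] [AddCommMonoid M]

theorem sum_card_nsmul_eq_sum_sum_filter_mem (A : ι → Finset α) (f : ι → M) :
    ∑ i, (A i).card • f i = ∑ a, ∑ i with a ∈ A i, f i :=
  calc ∑ i, (A i).card • f i
      = ∑ i, ∑ _a ∈ A i, f i := by simp only [Finset.sum_const]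
    _ = ∑ a, ∑ i with a ∈ A i, f i := Finset.sum_comm' (by simp)

end DoubleCounting

section SerialSchedule

variable {ι : Type*} [LinearOrder ι] [LocallyFiniteOrderBot ι]

/-- The schedule running the transactions one after another without idle time, in the order of the
index type: each starts once all of its predecessors have been executed. -/
def serialSchedule (τ : ι → ℕ) (i : ι) : ℕ :=
  ∑ j ∈ Finset.Iio i, τ j

theorem serialSchedule_add_eq_sum_Iic (τ : ι → ℕ) (i : ι) :
    serialSchedule τ i + τ i = ∑ j ∈ Finset.Iic i, τ j :=
  Finset.sum_Iio_add_eq_sum_Iic i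

theorem serialSchedule_add_le_of_lt (τ : ι → ℕ) {i j : ι} (hij : i < j) :
    serialSchedule τ i + τ i ≤ serialSchedule τ j := by
  rw [serialSchedule_add_eq_sum_Iic]
  refine Finset.sum_le_sum_of_subset fun k hk => ?_
  exact Finset.mem_Iio.2 ((Finset.mem_Iic.1 hk).trans_lt hij)

theorem disjoint_Ico_serialSchedule_of_lt (τ : ι → ℕ) {i j : ι} (hij : i < j) :
    Disjoint (Finset.Ico (serialSchedule τ i) (serialSchedule τ i + τ i))
      (Finset.Ico (serialSchedule τ j) (serialSchedule τ j + τ j)) :=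
  (Finset.Ico_disjoint_Ico_consecutive _ _ _).mono_right
    (Finset.Ico_subset_Ico_left (serialSchedule_add_le_of_lt τ hij))

theorem validSchedule_serialSchedule {s : ℕ} (W Rd : ι → Finset (Fin s)) (τ : ι → ℕ) :
    ValidSchedule W Rd τ (serialSchedule τ) := fun _ _ hconflict =>
  hconflict.1.lt_or_gt.elim (disjoint_Ico_serialSchedule_of_lt τ)
    fun hji => (disjoint_Ico_serialSchedule_of_lt τ hji).symm

theorem makespan_serialSchedule_le_sum [Fintype ι] (τ : ι → ℕ) :
    makespan τ (serialSchedule τ) ≤ ∑ i, τ i :=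
  Finset.sup_le fun i _ => (serialSchedule_add_eq_sum_Iic τ i).trans_le
    (Finset.sum_le_sum_of_subset (Finset.subset_univ _))

end SerialSchedule

theorem conflict_of_mem_of_mem {ι : Type*} {s : ℕ} {W : ι → Finset (Fin s)}
    (Rd : ι → Finset (Fin s)) {i j : ι} (hij : i ≠ j) {r : Fin s} (hi : r ∈ W i)
    (hj : r ∈ W j) : Conflict W Rd i j :=
  ⟨hij, .inl ⟨r, Finset.mem_inter.2 ⟨hi, Finset.mem_union_left _ hj⟩⟩⟩

section Makespan

variable {ι : Type*} [Fintype ι] {s : ℕ} {W Rd : ι → Finset (Fin s)} {τ σ : ι → ℕ}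

theorem exists_validSchedule_makespan_le_sum (W Rd : ι → Finset (Fin s)) (τ : ι → ℕ) :
    ∃ σ, ValidSchedule W Rd τ σ ∧ makespan τ σ ≤ ∑ i, τ i := by
  let : LinearOrder ι := LinearOrder.lift' (Fintype.equivFin ι) (Fintype.equivFin ι).injective
  let : LocallyFiniteOrderBot ι := .ofIic ι (fun i => {j | j ≤ i}) (by simp)
  exact ⟨serialSchedule τ, validSchedule_serialSchedule W Rd τ, makespan_serialSchedule_le_sum τ⟩

theorem add_le_makespan (τ σ : ι → ℕ) (i : ι) : σ i + τ i ≤ makespan τ σ :=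
  Finset.le_sup (f := fun i => σ i + τ i) (Finset.mem_univ i)

theorem sum_le_makespan_of_pairwiseDisjoint {t : Finset ι}
    (ht : (t : Set ι).PairwiseDisjoint fun i => Finset.Ico (σ i) (σ i + τ i)) :
    ∑ i ∈ t, τ i ≤ makespan τ σ := by
  have hsubset :
      t.biUnion (fun i => Finset.Ico (σ i) (σ i + τ i)) ⊆ Finset.range (makespan τ σ) :=
    Finset.biUnion_subset.2 fun i _ _ hx =>
      Finset.mem_range.2 ((Finset.mem_Ico.1 hx).2.trans_le (add_le_makespan τ σ i))
  calc ∑ i ∈ t, τ i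
      = ∑ i ∈ t, (Finset.Ico (σ i) (σ i + τ i)).card := by
        simp only [Nat.card_Ico, Nat.add_sub_cancel_left]
    _ = (t.biUnion fun i => Finset.Ico (σ i) (σ i + τ i)).card := (Finset.card_biUnion ht).symm
    _ ≤ (Finset.range (makespan τ σ)).card := Finset.card_le_card hsubset
    _ = makespan τ σ := Finset.card_range _

namespace ValidSchedule

theorem sum_writers_le_makespan (hσ : ValidSchedule W Rd τ σ) (r : Fin s) :
    ∑ i with r ∈ W i, τ i ≤ makespan τ σ :=
  sum_le_makespan_of_pairwiseDisjoint fun i hi j hj hij =>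
    hσ i j (conflict_of_mem_of_mem Rd hij (by simpa using hi) (by simpa using hj))

theorem mul_sum_le_mul_makespan (hσ : ValidSchedule W Rd τ σ) {m : ℕ}
    (hW : ∀ i, m ≤ (W i).card) : m * ∑ i, τ i ≤ s * makespan τ σ :=
  calc m * ∑ i, τ i
      = ∑ i, m * τ i := Finset.mul_sum _ _ _
    _ ≤ ∑ i, (W i).card * τ i := by gcongr with i; exact hW i
    _ = ∑ r, ∑ i with r ∈ W i, τ i := sum_card_nsmul_eq_sum_sum_filter_mem W τ
    _ ≤ ∑ _r : Fin s, makespan τ σ := by gcongr with r; exact hσ.sum_writers_le_makespan r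
    _ = s * makespan τ σ := by simp

end ValidSchedule

end Makespan

theorem stmt6_general {ι : Type*} [Fintype ι] {s m : ℕ} (hm : 1 ≤ m)
    (W Rd : ι → Finset (Fin s)) (τ : ι → ℕ) (hW : ∀ i, m ≤ (W i).card) :
    ∃ σ : ι → ℕ, ValidSchedule W Rd τ σ ∧
      ∀ σ' : ι → ℕ, ValidSchedule W Rd τ σ' →
        (makespan τ σ : ℝ) ≤ (s / m : ℝ) * makespan τ σ' := by
  obtain ⟨σ, hσ, hσ_le⟩ := exists_validSchedule_makespan_le_sum W Rd τ
  refine ⟨σ, hσ, fun σ' hσ' => ?_⟩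
  have hmul : makespan τ σ * m ≤ s * makespan τ σ' :=
    calc makespan τ σ * m
        ≤ (∑ i, τ i) * m := by gcongr
      _ = m * ∑ i, τ i := mul_comm _ _
      _ ≤ s * makespan τ σ' := hσ'.mul_sum_le_mul_makespan hW
  rw [div_mul_eq_mul_div, le_div_iff₀ (by exact_mod_cast hm)]
  exact_mod_cast hmul

/-- Per-subgroup competitive bound (Lemma 2): if each of the `n` transactions writes at
least `m ≥ 1` of the `s ≥ 1` resources and durations lie in `[τmin, 2·τmin]`, there is a
valid schedule whose makespan is within a factor `2·s/m` of every valid schedule. -/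
theorem stmt6 {ι : Type*} [Fintype ι] {s n m τmin : ℕ}
    (hs : 1 ≤ s) (hm : 1 ≤ m) (hτmin : 1 ≤ τmin)
    (hn : Fintype.card ι = n)
    (W Rd : ι → Finset (Fin s)) (τ : ι → ℕ)
    (hW : ∀ i, m ≤ (W i).card)
    (hτ : ∀ i, τmin ≤ τ i ∧ τ i ≤ 2 * τmin) :
    ∃ σ : ι → ℕ, ValidSchedule W Rd τ σ ∧
      ∀ σ' : ι → ℕ, ValidSchedule W Rd τ σ' →
        (makespan τ σ : ℝ) ≤ (2 * s / m : ℝ) * makespan τ σ' := by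
  obtain ⟨σ, hσ, hσ_le⟩ := stmt6_general hm W Rd τ hW
  exact ⟨σ, hσ, fun σ' hσ' => (hσ_le σ' hσ').trans <| by
    gcongr; exact le_mul_of_one_le_left s.cast_nonneg one_le_two⟩
end

section
/- Let G be a simple graph on a finite vertex type V, and consider the transaction scheduling instance in which resources are the edges of G, the transaction of vertex v writes exactly the edges incident to v, reads nothing, and has duration 1. Then for every k ≥ 1: G has a proper vertex coloring with k colors if and only if this instance admits a valid schedule with makespan at most k. Consequently, the minimum makespan over all valid schedules equals the chromatic number of G. -/
namespace TransactionScheduling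

variable {ι R : Type*} {W : ι → Set R}

/-- Validity of the start times `σ` for transactions of duration `1` that read nothing and write
the resources `W i`: distinct transactions writing a common resource do not start together. -/
def IsValidSchedule (W : ι → Set R) (σ : ι → ℕ) : Prop :=
  ∀ i j, i ≠ j → (W i ∩ W j).Nonempty → σ i ≠ σ j

/-- The conflict graph of a scheduling instance with write sets `W`: distinct transactions are
adjacent when they write a common resource. -/
def conflictGraph (W : ι → Set R) : SimpleGraph ι where
  Adj i j := i ≠ j ∧ (W i ∩ W j).Nonempty
  symm := ⟨fun _ _ h ↦ ⟨h.1.symm, Set.inter_comm _ _ ▸ h.2⟩⟩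
  loopless := ⟨fun _ h ↦ h.1 rfl⟩

theorem isValidSchedule_iff_forall_adj {σ : ι → ℕ} :
    IsValidSchedule W σ ↔ ∀ ⦃i j⦄, (conflictGraph W).Adj i j → σ i ≠ σ j :=
  ⟨fun hσ _ _ h ↦ hσ _ _ h.1 h.2, fun hσ _ _ hne hij ↦ hσ ⟨hne, hij⟩⟩

theorem conflictGraph_incidenceSet {V : Type*} (G : SimpleGraph V) :
    conflictGraph G.incidenceSet = G := by
  ext u v
  constructor
  · rintro ⟨hne, e, hu, hv⟩
    exact G.adj_of_mem_incidenceSet hne hu hv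
  · intro h
    exact ⟨h.ne, G.incidenceSet_inter_incidenceSet_of_adj h ▸ Set.singleton_nonempty _⟩

theorem exists_isValidSchedule [Countable ι] (W : ι → Set R) : ∃ σ, IsValidSchedule W σ :=
  let ⟨σ, hσ⟩ := exists_injective_nat ι
  ⟨σ, fun _ _ hne _ ↦ hσ.ne hne⟩

variable [Fintype ι]

/-- The makespan of a schedule of transactions of duration `1`: the last completion time, taken to
be `0` when there are no transactions. -/
def makespan (σ : ι → ℕ) : ℕ :=
  Finset.univ.sup fun i ↦ σ i + 1

theorem makespan_le_iff {σ : ι → ℕ} {k : ℕ} : makespan σ ≤ k ↔ ∀ i, σ i < k := by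
  simp [makespan]

theorem conflictGraph_colorable_iff {k : ℕ} :
    (conflictGraph W).Colorable k ↔ ∃ σ, IsValidSchedule W σ ∧ makespan σ ≤ k := by
  simp only [SimpleGraph.colorable_iff_exists_bdd_nat_coloring, makespan_le_iff,
    isValidSchedule_iff_forall_adj]
  constructor
  · rintro ⟨C, hC⟩
    exact ⟨C, fun _ _ h ↦ C.valid h, hC⟩
  · rintro ⟨σ, hσ, hk⟩
    exact ⟨.mk σ fun {_ _} h ↦ hσ h, hk⟩

/-- The minimum makespan of a valid schedule for the write sets `W`. The set is nonempty by
`exists_isValidSchedule`, so the infimum in `ℕ` is attained. -/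
noncomputable def minMakespan (W : ι → Set R) : ℕ :=
  sInf {m | ∃ σ, IsValidSchedule W σ ∧ makespan σ = m}

theorem exists_makespan_eq_minMakespan (W : ι → Set R) :
    ∃ σ, IsValidSchedule W σ ∧ makespan σ = minMakespan W := by
  obtain ⟨σ, hσ⟩ := exists_isValidSchedule W
  exact Nat.sInf_mem (s := {m | ∃ σ, IsValidSchedule W σ ∧ makespan σ = m}) ⟨_, σ, hσ, rfl⟩

theorem IsValidSchedule.minMakespan_le {σ : ι → ℕ} (hσ : IsValidSchedule W σ) :
    minMakespan W ≤ makespan σ :=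
  Nat.sInf_le ⟨σ, hσ, rfl⟩

theorem minMakespan_le_iff_colorable {k : ℕ} :
    minMakespan W ≤ k ↔ (conflictGraph W).Colorable k := by
  rw [conflictGraph_colorable_iff]
  constructor
  · intro hk
    obtain ⟨σ, hσ, hmin⟩ := exists_makespan_eq_minMakespan W
    exact ⟨σ, hσ, hmin.trans_le hk⟩
  · rintro ⟨σ, hσ, hk⟩
    exact hσ.minMakespan_le.trans hk

theorem minMakespan_eq_chromaticNumber (W : ι → Set R) :
    (minMakespan W : ℕ∞) = (conflictGraph W).chromaticNumber := by
  refine eq_of_forall_ge_iff fun c ↦ ?_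
  cases c with
  | top => simp only [le_top]
  | coe k =>
    rw [Nat.cast_le, minMakespan_le_iff_colorable, SimpleGraph.chromaticNumber_le_iff_colorable]

end TransactionScheduling

/-- Reduction of Vertex Coloring to Transaction Scheduling: with resources the edges of
`G`, the transaction of vertex `v` writing exactly the edges incident to `v`, reading
nothing, and having duration `1`, a schedule `σ : V → ℕ` is valid iff distinct vertices
whose incident-edge sets intersect get different start times, and its makespan is
`sup_v (σ v + 1)`.  Then for every `k ≥ 1`, `G` is `k`-colorable iff there is a valid
schedule of makespan at most `k`; consequently, the minimum makespan over valid schedules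
equals the chromatic number of `G`. -/
theorem stmt16 {V : Type*} [Fintype V] (G : SimpleGraph V) :
    (∀ k : ℕ, 1 ≤ k →
      (G.Colorable k ↔
        ∃ σ : V → ℕ,
          (∀ u v : V, u ≠ v →
            ({e ∈ G.edgeSet | u ∈ e} ∩ {e ∈ G.edgeSet | v ∈ e}).Nonempty → σ u ≠ σ v) ∧
          Finset.univ.sup (fun v => σ v + 1) ≤ k)) ∧
    ((sInf {m : ℕ | ∃ σ : V → ℕ,
        (∀ u v : V, u ≠ v →
          ({e ∈ G.edgeSet | u ∈ e} ∩ {e ∈ G.edgeSet | v ∈ e}).Nonempty → σ u ≠ σ v) ∧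
        Finset.univ.sup (fun v => σ v + 1) = m} : ℕ) : ℕ∞) = G.chromaticNumber := by
  have hG : TransactionScheduling.conflictGraph G.incidenceSet = G :=
    TransactionScheduling.conflictGraph_incidenceSet G
  constructor
  · intro k _
    have hk := TransactionScheduling.conflictGraph_colorable_iff (W := G.incidenceSet) (k := k)
    rwa [hG] at hk
  · have hmin := TransactionScheduling.minMakespan_eq_chromaticNumber G.incidenceSet
    rwa [hG] at hmin
end
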